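/- The shuffle product with spectral parameters, A * B = Σ over shuffles {1,...,k+l} = {a₁<...<a_k}⊔{b₁<...<b_l} of [∏_{i=k..1, j=1..l, a_i<b_j} R_{a_i b_j}(z_{a_i}/z_{b_j})] A_{a₁...a_k}(z_{a₁},...,z_{a_k}) [∏_{i=1..k, j=l..1} R̃_{a_i b_j}(z_{a_i}/z_{b_j})] B_{b₁...b_l}(z_{b₁},...,z_{b_l}) [∏_{i=k..1, j=1..l, a_i>b_j} R_{a_i b_j}(z_{a_i}/z_{b_j})], is associative on ⊕_{k≥0} End(V^{⊗k})(z₁,...,z_k) with unit 1 ∈ End(V^{⊗0}). -/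

import Mathlib

/-!
STATEMENT 14: The shuffle product with spectral parameters,
`A * B = Σ_{shuffles} [∏_{a_i<b_j} R_{a_ib_j}(z_{a_i}/z_{b_j})]
 A_{a₁…a_k}(z_{a₁},…) [∏ R̃_{a_ib_j}(z_{a_i}/z_{b_j})] B_{b₁…b_l}(z_{b₁},…)
 [∏_{a_i>b_j} R_{a_ib_j}(z_{a_i}/z_{b_j})]`,
is associative on `⊕_{k≥0} End(V^{⊗k})(z₁,…,z_k)` with unit
`1 ∈ End(V^{⊗0})`.  (Matrix-valued rational functions are modeled pointwise:
the identities are asserted at every tuple of spectral parameters where all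
denominators are nonzero.)
-/

abbrev Idx (n k : ℕ) := Fin k → Fin n

/-- The quantum affine gl_n R-matrix, indexed by `Fin 2 → Fin n`. -/
def RmI (n : ℕ) {K : Type*} [Field K] (q x : K) :
    Matrix (Idx n 2) (Idx n 2) K := fun u v =>
  (if u = v then (if u 0 = u 1 then (q - x * q⁻¹) / (1 - x) else 1) else 0) +
  (if u 0 ≠ u 1 ∧ v 0 = u 1 ∧ v 1 = u 0 then
    (q - q⁻¹) * (if u 0 < u 1 then x else 1) / (1 - x) else 0)

/-- `R̃(x) = R₂₁(1/(x q̄²))`. -/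
def RtI (n : ℕ) {K : Type*} [Field K] (q qbar x : K) :
    Matrix (Idx n 2) (Idx n 2) K := fun u v =>
  RmI n q ((x * qbar ^ 2)⁻¹) (u ∘ Equiv.swap 0 1) (v ∘ Equiv.swap 0 1)

def embed {K : Type*} [CommRing K] {n k N : ℕ} (ι : Fin k → Fin N)
    (X : Matrix (Idx n k) (Idx n k) K) : Matrix (Idx n N) (Idx n N) K :=
  fun f g => X (f ∘ ι) (g ∘ ι) *
    ∏ b : Fin N, if b ∈ Finset.image ι Finset.univ then 1
      else (if f b = g b then 1 else 0)

section Shuffle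

variable {K : Type*} [Field K] (n : ℕ) (q qbar : K)

/-- `∏ R_{a_i b_j}(z_{a_i}/z_{b_j})` over pairs with `a_i < b_j`,
ordered as `R_{a_kb_1} ⋯ R_{a_1b_l}`. -/
def prodLt {k l N : ℕ} (z : Fin N → K) (a : Fin k → Fin N) (b : Fin l → Fin N) :
    Matrix (Idx n N) (Idx n N) K :=
  (((List.finRange l).map fun j =>
    (((List.finRange k).reverse.map fun i =>
      if a i < b j then embed ![a i, b j] (RmI n q (z (a i) / z (b j)))
      else 1)).prod)).prod

/-- `∏ R_{a_i b_j}(z_{a_i}/z_{b_j})` over pairs with `a_i > b_j`. -/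
def prodGt {k l N : ℕ} (z : Fin N → K) (a : Fin k → Fin N) (b : Fin l → Fin N) :
    Matrix (Idx n N) (Idx n N) K :=
  (((List.finRange l).map fun j =>
    (((List.finRange k).reverse.map fun i =>
      if b j < a i then embed ![a i, b j] (RmI n q (z (a i) / z (b j)))
      else 1)).prod)).prod

/-- `R̃_{a_1b_l}(z_{a_1}/z_{b_l}) ⋯ R̃_{a_kb_1}(z_{a_k}/z_{b_1})`. -/
def prodMid {k l N : ℕ} (z : Fin N → K) (a : Fin k → Fin N) (b : Fin l → Fin N) :
    Matrix (Idx n N) (Idx n N) K :=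
  (((List.finRange k).map fun i =>
    (((List.finRange l).reverse.map fun j =>
      embed ![a i, b j] (RtI n q qbar (z (a i) / z (b j))))).prod)).prod

/-- The shuffle product with spectral parameters (pointwise in z). -/
def shufS {k l : ℕ}
    (A : (Fin k → K) → Matrix (Idx n k) (Idx n k) K)
    (B : (Fin l → K) → Matrix (Idx n l) (Idx n l) K) :
    (Fin (k + l) → K) → Matrix (Idx n (k + l)) (Idx n (k + l)) K := fun z =>
  ∑ s : {s : Finset (Fin (k + l)) // s.card = k},
    let a : Fin k → Fin (k + l) := s.1.orderEmbOfFin s.2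
    let b : Fin l → Fin (k + l) := (s.1ᶜ).orderEmbOfFin
      (by rw [Finset.card_compl, s.2, Fintype.card_fin]; omega)
    prodLt n q z a b * embed a (A (z ∘ a)) * prodMid n q qbar z a b *
      embed b (B (z ∘ b)) * prodGt n q z a b

/-- Transport along an equality of the number of tensor factors. -/
def recastM {m m' : ℕ} (h : m = m') (M : Matrix (Idx n m) (Idx n m) K) :
    Matrix (Idx n m') (Idx n m') K := h ▸ M

/-- The unit `1 ∈ End(V^{⊗0})`. -/
def oneS : (Fin 0 → K) → Matrix (Idx n 0) (Idx n 0) K := fun _ => 1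

end Shuffle

/-- Good tuples of spectral parameters: nonzero, pairwise distinct, and
avoiding the poles `z_a q̄² = z_b` of `R̃`. -/
def GoodZ {K : Type*} [Field K] (qbar : K) {N : ℕ} (z : Fin N → K) : Prop :=
  (∀ a, z a ≠ 0) ∧ (∀ a b, a ≠ b → z a ≠ z b) ∧
    (∀ a b, a ≠ b → z a * qbar ^ 2 ≠ z b)

/-!
Every ordered product of R-matrices in the shuffle product is the weight of a way of rearranging
a word by adjacent transpositions, where exchanging the neighbours `i` and `j` contributes
`R_{ij}`. By the Yang–Baxter equation the weight of passing from one word to another in the least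
number of steps does not depend on the steps chosen. Moreover `R̃_{ij}(z_i / z_j)` is
`R_{ji}(w_j / w_i)` for the parameters `w` obtained from `z` by multiplying `z_i` by `q̄²`, so
products mixing `R` and `R̃` are weights for a single Yang–Baxter family as well. For disjoint sets
`a`, `b`, `c` of tensor factors, comparing two routes between the same two words gives four exchange
identities, and these identify the two iterated products summand by summand, over the
decompositions of the tensor factors into such `a`, `b`, `c`.
-/

open scoped List Matrix

section PairProducts

variable {α β γ δ M N : Type*} [Monoid M] [Monoid N]

/-- The ordered product of the `F i j` over all pairs `(i, j)` of entries of `s` and `t`, in the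
order of the shuffle product: `j` runs upwards and, for each `j`, `i` runs downwards. -/
def pairProd (F : α → β → M) (s : List α) (t : List β) : M :=
  (t.map fun j => (s.reverse.map fun i => F i j).prod).prod

lemma pairProd_cons_right (F : α → β → M) (s : List α) (y : β) (t : List β) :
    pairProd F s (y :: t) = pairProd F s [y] * pairProd F s t := by
  simp [pairProd]

lemma pairProd_append_right (F : α → β → M) (s : List α) (t t' : List β) :
    pairProd F s (t ++ t') = pairProd F s t * pairProd F s t' := by
  simp [pairProd]

lemma pairProd_cons_left_of_eq_one {F : α → β → M} {x : α} {s : List α} {t : List β}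
    (h : ∀ j ∈ t, F x j = 1) : pairProd F (x :: s) t = pairProd F s t :=
  congrArg List.prod (List.map_congr_left fun j hj => by simp [h j hj])

lemma pairProd_append_left_of_eq_one {F : α → β → M} {x : α} {s : List α} {t : List β}
    (h : ∀ j ∈ t, F x j = 1) : pairProd F (s ++ [x]) t = pairProd F s t :=
  congrArg List.prod (List.map_congr_left fun j hj => by simp [h j hj])

lemma pairProd_congr {F G : α → β → M} {s : List α} {t : List β}
    (h : ∀ i ∈ s, ∀ j ∈ t, F i j = G i j) : pairProd F s t = pairProd G s t := by
  refine congrArg List.prod (List.map_congr_left fun j hj => ?_)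
  exact congrArg List.prod (List.map_congr_left fun i hi => h i (List.mem_reverse.1 hi) j hj)

lemma pairProd_map_map (F : α → β → M) (f : γ → α) (g : δ → β) (s : List γ) (t : List δ) :
    pairProd F (s.map f) (t.map g) = pairProd (fun i j => F (f i) (g j)) s t := by
  simp [pairProd, ← List.map_reverse, Function.comp_def]

lemma map_pairProd (φ : M →* N) (F : α → β → M) (s : List α) (t : List β) :
    φ (pairProd F s t) = pairProd (fun i j => φ (F i j)) s t := by
  simp [pairProd, map_list_prod, Function.comp_def]

lemma commute_pairProd {x : M} {F : α → β → M} {s : List α} {t : List β}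
    (h : ∀ i ∈ s, ∀ j ∈ t, Commute x (F i j)) : Commute x (pairProd F s t) := by
  refine Commute.list_prod_right _ _ (List.forall_mem_map.2 fun j hj => ?_)
  exact Commute.list_prod_right _ _
    (List.forall_mem_map.2 fun i hi => h i (List.mem_reverse.1 hi) j hj)

end PairProducts

lemma pair_sublist_append {α : Type*} {x y : α} {l l' : List α} (hx : x ∈ l) (hy : y ∈ l') :
    [x, y] <+ l ++ l' :=
  (List.singleton_sublist.2 hx).append (List.singleton_sublist.2 hy)

section ReducedWords

variable {α M : Type*} [Monoid M]

/-- A family `R i j` solving the Yang–Baxter equation: `R i j` plays the role of an R-matrix acting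
on the tensor factors `i` and `j`. -/
structure IsYangBaxter (R : α → α → M) : Prop where
  commute {i j k l : α} :
    i ≠ j → k ≠ l → i ≠ k → i ≠ l → j ≠ k → j ≠ l → Commute (R i j) (R k l)
  braid {i j k : α} : i ≠ j → i ≠ k → j ≠ k → R i j * R i k * R j k = R j k * R i k * R i j

variable [DecidableEq α]

/-- The product of the `R x y` collected when the letter `y` moves to the front of a word, passing
the letters `x` before it one at a time. -/
def passWeight (R : α → α → M) : List α → α → M
  | [], _ => 1
  | x :: m, y => if x = y then 1 else passWeight R m y * R x y

/-- The product of the `R x y` collected when the word `m` is rearranged into the word `t` by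
adjacent transpositions `x y ↦ y x`, the letters of `t` being moved to the front in turn. -/
def sortWeight (R : α → α → M) : List α → List α → M
  | _, [] => 1
  | m, y :: t => passWeight R m y * sortWeight R (m.erase y) t

lemma sortWeight_self (R : α → α → M) (t : List α) : sortWeight R t t = 1 := by
  induction t with
  | nil => rfl
  | cons y t ih => simp [sortWeight, passWeight, ih]

variable {R : α → α → M}

lemma passWeight_swap_self {u v : List α} {r s : α} (hu : s ∉ u) (hrs : r ≠ s) :
    passWeight R (u ++ r :: s :: v) s = R r s * passWeight R (u ++ s :: r :: v) s := by
  induction u with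
  | nil => simp [passWeight, hrs]
  | cons x u ih =>
    obtain ⟨hx, hu⟩ := List.ne_and_not_mem_of_not_mem_cons hu
    simp only [List.cons_append, passWeight, if_neg (Ne.symm hx), ih hu, mul_assoc]

lemma IsYangBaxter.commute_passWeight (hR : IsYangBaxter R) {v : List α} {r s y : α}
    (hrs : r ≠ s) (hr : r ∉ v) (hs : s ∉ v) (hyr : y ≠ r) (hys : y ≠ s) :
    Commute (R r s) (passWeight R v y) := by
  induction v with
  | nil => exact Commute.one_right _
  | cons x v ih =>
    obtain ⟨hrx, hr⟩ := List.ne_and_not_mem_of_not_mem_cons hr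
    obtain ⟨hsx, hs⟩ := List.ne_and_not_mem_of_not_mem_cons hs
    rw [passWeight]
    split_ifs with hxy
    · exact Commute.one_right _
    · exact (ih hr hs).mul_right (hR.commute hrs hxy hrx hyr.symm hsx hys.symm)

lemma IsYangBaxter.passWeight_swap (hR : IsYangBaxter R) {u v : List α} {r s y : α}
    (hm : (u ++ r :: s :: v).Nodup) (hyr : y ≠ r) (hys : y ≠ s) :
    passWeight R (u ++ r :: s :: v) y * R r s = R r s * passWeight R (u ++ s :: r :: v) y := by
  induction u with
  | nil =>
    simp only [List.nil_append, List.nodup_cons, List.mem_cons, not_or] at hm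
    have hcomm := hR.commute_passWeight hm.1.1 hm.1.2 hm.2.1 hyr hys
    simp only [List.nil_append, passWeight, if_neg hyr.symm, if_neg hys.symm]
    calc passWeight R v y * R s y * R r y * R r s
        = passWeight R v y * (R s y * R r y * R r s) := by simp only [mul_assoc]
      _ = passWeight R v y * R r s * R r y * R s y := by
        rw [← hR.braid hm.1.1 hyr.symm hys.symm]; simp only [mul_assoc]
      _ = R r s * (passWeight R v y * R r y * R s y) := by
        rw [← hcomm.eq]; simp only [mul_assoc]
  | cons x u ih =>
    simp only [List.cons_append, List.nodup_cons, List.mem_append, List.mem_cons, not_or] at hm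
    obtain ⟨⟨-, hxr, hxs, -⟩, hm⟩ := hm
    have hrs : r ≠ s := by
      simp only [List.nodup_append, List.nodup_cons, List.mem_cons, not_or] at hm
      exact hm.2.1.1.1
    simp only [List.cons_append, passWeight]
    split_ifs with hxy
    · simp
    · rw [mul_assoc, (hR.commute hxy hrs hxr hxs hyr hys).eq, ← mul_assoc, ih hm, mul_assoc]

/-- The Yang–Baxter equation makes the weight independent of the reduced path: any transposition
`r s ↦ s r` towards the target may be performed first. -/
lemma IsYangBaxter.sortWeight_swap (hR : IsYangBaxter R) {u v t : List α} {r s : α}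
    (hm : (u ++ r :: s :: v).Nodup) (ht : t.Nodup) (hsr : [s, r] <+ t) :
    sortWeight R (u ++ r :: s :: v) t = R r s * sortWeight R (u ++ s :: r :: v) t := by
  induction t generalizing u v with
  | nil => simp at hsr
  | cons y t ih =>
    obtain ⟨hyt, ht⟩ := List.nodup_cons.1 ht
    have hrs : r ≠ s := by
      simp only [List.nodup_append, List.nodup_cons, List.mem_cons, not_or] at hm
      exact hm.2.1.1.1
    by_cases hys : y = s
    · subst hys
      have hyu : y ∉ u := fun h => (List.nodup_append.1 hm).2.2 y h y (by simp) rfl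
      simp [sortWeight, passWeight_swap_self hyu hrs, List.erase_append_right _ hyu, hrs, mul_assoc]
    · have hsr : [s, r] <+ t := by
        cases hsr with
        | cons _ h => exact h
        | cons_cons _ _ => exact absurd rfl hys
      have hyr : y ≠ r := fun h => hyt (h ▸ hsr.subset (by simp))
      simp only [sortWeight, ← mul_assoc, ← hR.passWeight_swap hm hyr hys]
      rw [mul_assoc]
      congr 1
      by_cases hyu : y ∈ u
      · rw [List.erase_append_left _ hyu, List.erase_append_left _ hyu]
        refine ih ?_ ht hsr
        exact List.erase_append_left (l₁ := u) (r :: s :: v) hyu ▸ hm.erase y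
      · have herase : ∀ x x', y ≠ x → y ≠ x' →
            (u ++ x :: x' :: v).erase y = u ++ x :: x' :: v.erase y := fun x x' hx hx' => by
          rw [List.erase_append_right _ hyu, List.erase_cons_tail (by simpa using hx.symm),
            List.erase_cons_tail (by simpa using hx'.symm)]
        rw [herase r s hyr hys, herase s r hys hyr]
        exact ih (herase r s hyr hys ▸ hm.erase y) ht hsr

lemma IsYangBaxter.sortWeight_pass (hR : IsYangBaxter R) {u b v t : List α} {s : α}
    (hm : (u ++ b ++ s :: v).Nodup) (ht : t.Nodup) (h : ∀ x ∈ b, [s, x] <+ t) :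
    sortWeight R (u ++ b ++ s :: v) t =
      pairProd R b [s] * sortWeight R (u ++ s :: b ++ v) t := by
  induction b using List.reverseRecOn generalizing v with
  | nil => simp [pairProd]
  | append_singleton b x ih =>
    have hm' : ((u ++ b) ++ x :: s :: v).Nodup := by simpa using hm
    have hm'' : (u ++ b ++ s :: x :: v).Nodup :=
      (((List.Perm.swap s x v).append_left (u ++ b)).nodup_iff).1 hm'
    calc sortWeight R (u ++ (b ++ [x]) ++ s :: v) t
        = sortWeight R ((u ++ b) ++ x :: s :: v) t := by simp
      _ = R x s * sortWeight R (u ++ b ++ s :: x :: v) t :=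
        hR.sortWeight_swap hm' ht (h x (by simp))
      _ = _ := by
        rw [ih hm'' fun y hy => h y (List.mem_append_left _ hy)]
        simp [pairProd, mul_assoc]

lemma IsYangBaxter.sortWeight_append_comm (hR : IsYangBaxter R) {u b c v t : List α}
    (hm : (u ++ (b ++ c) ++ v).Nodup) (ht : t.Nodup) (h : ∀ x ∈ b, ∀ y ∈ c, [y, x] <+ t) :
    sortWeight R (u ++ (b ++ c) ++ v) t =
      pairProd R b c * sortWeight R (u ++ (c ++ b) ++ v) t := by
  induction c generalizing u with
  | nil => simp [pairProd]
  | cons y c ih =>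
    have hm' : (u ++ b ++ y :: (c ++ v)).Nodup := by simpa using hm
    have hperm : u ++ b ++ y :: (c ++ v) ~ (u ++ [y]) ++ (b ++ c) ++ v := by
      simpa using (List.perm_middle (a := y) (l₁ := b) (l₂ := c ++ v)).append_left u
    calc sortWeight R (u ++ (b ++ y :: c) ++ v) t
        = sortWeight R (u ++ b ++ y :: (c ++ v)) t := by simp
      _ = pairProd R b [y] * sortWeight R ((u ++ [y]) ++ (b ++ c) ++ v) t := by
        rw [hR.sortWeight_pass hm' ht fun x hx => h x hx y List.mem_cons_self]; simp
      _ = _ := by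
        rw [ih (hperm.nodup_iff.1 hm') fun x hx z hz => h x hx z (List.mem_cons_of_mem _ hz),
          pairProd_cons_right R b y c, mul_assoc]
        simp

end ReducedWords

section Shuffles

variable {α M : Type*} [LinearOrder α] [Monoid M]

/-- The factors of `∏_{i < j} R i j`, completed by `1` on the other pairs. -/
def onLt (R : α → α → M) (i j : α) : M := if i < j then R i j else 1

/-- The factors of `∏_{i > j} R i j`, completed by `1` on the other pairs. -/
def onGt (R : α → α → M) (i j : α) : M := if j < i then R i j else 1

/-- The product of the `F i j` over `i ∈ a` and `j ∈ b`, in the order of `pairProd`. -/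
def crossProd (F : α → α → M) (a b : Finset α) : M := pairProd F a.sort b.sort

lemma crossProd_congr {F G : α → α → M} {a b : Finset α}
    (h : ∀ i ∈ a, ∀ j ∈ b, F i j = G i j) : crossProd F a b = crossProd G a b :=
  pairProd_congr fun i hi j hj => h i ((Finset.mem_sort _).1 hi) j ((Finset.mem_sort _).1 hj)

lemma crossProd_eq_pairProd (F : α → α → M) {a b : Finset α} {k l : ℕ} (ha : a.card = k)
    (hb : b.card = l) : crossProd F a b =
      pairProd (fun i j => F (a.orderEmbOfFin ha i) (b.orderEmbOfFin hb j))
        (List.finRange k) (List.finRange l) := by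
  rw [← pairProd_map_map, Finset.listMap_orderEmbOfFin_finRange,
    Finset.listMap_orderEmbOfFin_finRange, crossProd]

lemma map_crossProd {β N : Type*} [LinearOrder β] [Monoid N] (φ : M →* N) (e : α ↪o β)
    {F : α → α → M} {G : β → β → N} (h : ∀ i j, φ (F i j) = G (e i) (e j)) (a b : Finset α) :
    φ (crossProd F a b) = crossProd G (a.map e.toEmbedding) (b.map e.toEmbedding) := by
  have hsort (s : Finset α) : (s.map e.toEmbedding).sort = s.sort.map e :=
    ((e.strictMono.strictMonoOn _).map_finsetSort (f := e.toEmbedding)).symm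
  rw [crossProd, crossProd, map_pairProd, hsort, hsort, pairProd_map_map]
  exact pairProd_congr fun i _ j _ => h i j

lemma commute_crossProd {x : M} {F : α → α → M} {a b : Finset α}
    (h : ∀ i ∈ a, ∀ j ∈ b, Commute x (F i j)) : Commute x (crossProd F a b) :=
  commute_pairProd fun i hi j hj => h i ((Finset.mem_sort _).1 hi) j ((Finset.mem_sort _).1 hj)

variable {R : α → α → M}

lemma IsYangBaxter.sortWeight_unshuffle (hR : IsYangBaxter R) {p : α → Bool}
    {u m v t : List α} (hsort : m.Pairwise (· < ·)) (hm : (u ++ m ++ v).Nodup) (ht : t.Nodup)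
    (h : ∀ x ∈ m, p x → ∀ y ∈ m, p y = false → [y, x] <+ t) :
    sortWeight R (u ++ m ++ v) t =
      pairProd (onLt R) (m.filter p) (m.filter (!p ·)) *
        sortWeight R (u ++ (m.filter (!p ·) ++ m.filter p) ++ v) t := by
  induction m using List.reverseRecOn generalizing v with
  | nil => simp [pairProd]
  | append_singleton m x ih =>
    obtain ⟨hsort, -, hlt⟩ := List.pairwise_append.1 hsort
    replace hlt : ∀ i ∈ m, i < x := fun i hi => hlt i hi x (List.mem_singleton_self x)
    have hm' : (u ++ m ++ x :: v).Nodup := by simpa using hm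
    have hperm : m ~ m.filter (!p ·) ++ m.filter p := by
      simpa using (List.perm_append_comm.trans (List.filter_append_perm p m)).symm
    have hnodup : (u ++ m.filter (!p ·) ++ m.filter p ++ x :: v).Nodup := by
      simpa using (((hperm.append_left u).append_right (x :: v)).nodup_iff).1 hm'
    rw [← List.append_assoc u, List.append_assoc, List.singleton_append,
      ih hsort hm' fun y hy hpy z hz hpz =>
        h y (List.mem_append_left _ hy) hpy z (List.mem_append_left _ hz) hpz]
    cases hp : p x with
    | true =>
      have hone : ∀ j ∈ m.filter (!p ·), onLt R x j = 1 := fun j hj =>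
        if_neg (hlt j (List.mem_of_mem_filter hj)).not_gt
      simp [hp, pairProd_append_left_of_eq_one hone]
    | false =>
      have hpass : pairProd R (m.filter p) [x] = pairProd (onLt R) (m.filter p) [x] :=
        pairProd_congr fun i hi j hj =>
          (if_pos (List.mem_singleton.1 hj ▸ hlt i (List.mem_of_mem_filter hi))).symm
      rw [← List.append_assoc, hR.sortWeight_pass hnodup ht]
      · simp [hp, hpass, pairProd_append_right, mul_assoc]
      · intro y hy
        obtain ⟨hy, hpy⟩ := List.mem_filter.1 hy
        exact h y (by simp [hy]) hpy x (by simp) hp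

lemma IsYangBaxter.sortWeight_shuffle (hR : IsYangBaxter R) {p : α → Bool}
    {u m v t : List α} (hsort : m.Pairwise (· < ·)) (hm : (u ++ m ++ v).Nodup) (ht : t.Nodup)
    (h : ∀ x ∈ m, p x → ∀ y ∈ m, p y = false → y < x → [y, x] <+ t) :
    sortWeight R (u ++ (m.filter p ++ m.filter (!p ·)) ++ v) t =
      pairProd (onGt R) (m.filter p) (m.filter (!p ·)) * sortWeight R (u ++ m ++ v) t := by
  induction m generalizing u with
  | nil => simp [pairProd]
  | cons x m ih =>
    obtain ⟨hlt, hsort⟩ := List.pairwise_cons.1 hsort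
    have hm' : ((u ++ [x]) ++ m ++ v).Nodup := by simpa using hm
    have hperm : m.filter p ++ m.filter (!p ·) ~ m := by
      simpa using List.filter_append_perm p m
    have hih := ih hsort hm' fun y hy hpy z hz hpz =>
      h y (List.mem_cons_of_mem _ hy) hpy z (List.mem_cons_of_mem _ hz) hpz
    cases hp : p x with
    | true =>
      have hone : ∀ j ∈ m.filter (!p ·), onGt R x j = 1 := fun j hj =>
        if_neg (hlt j (List.mem_of_mem_filter hj)).not_gt
      simpa [hp, pairProd_cons_left_of_eq_one hone] using hih
    | false =>
      have hpass : pairProd R (m.filter p) [x] = pairProd (onGt R) (m.filter p) [x] :=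
        pairProd_congr fun i hi j hj =>
          (if_pos (List.mem_singleton.1 hj ▸ hlt i (List.mem_of_mem_filter hi))).symm
      have hnodup : (u ++ m.filter p ++ x :: (m.filter (!p ·) ++ v)).Nodup := by
        refine (List.Perm.nodup_iff ?_).1 hm'
        simpa using (((hperm.symm.cons x).trans List.perm_middle.symm).append_right v).append_left u
      have hpass' := hR.sortWeight_pass hnodup ht fun y hy => by
        obtain ⟨hy, hpy⟩ := List.mem_filter.1 hy
        exact h y (by simp [hy]) hpy x (by simp) hp (hlt y hy)
      simp only [List.append_assoc, List.cons_append, List.nil_append] at hih hpass'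
      simp [hp, pairProd_cons_right (onGt R) (m.filter p) x (m.filter (!p ·)), hpass', hpass, hih,
        mul_assoc]

lemma sort_filter (s : Finset α) (p : α → Bool) : s.sort.filter p = (s.filter (p ·)).sort := by
  refine List.Pairwise.eq_of_mem_iff ((Finset.sortedLT_sort s).pairwise.filter p)
    (Finset.sortedLT_sort _).pairwise fun x => ?_
  simp

lemma sort_union_filter_mem (a b : Finset α) :
    (a ∪ b).sort.filter (fun x => decide (x ∈ a)) = a.sort := by
  rw [sort_filter]
  congr 1
  ext x
  grind

lemma sort_union_filter_notMem {a b : Finset α} (hab : Disjoint a b) :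
    (a ∪ b).sort.filter (fun x => !decide (x ∈ a)) = b.sort := by
  rw [sort_filter]
  congr 1
  ext x
  grind [Finset.disjoint_left]

variable {a b c : Finset α} {u v t : List α}

lemma IsYangBaxter.sortWeight_union (hR : IsYangBaxter R) (hab : Disjoint a b)
    (hm : (u ++ (a ∪ b).sort ++ v).Nodup) (ht : t.Nodup) (h : ∀ x ∈ a, ∀ y ∈ b, [y, x] <+ t) :
    sortWeight R (u ++ (a ∪ b).sort ++ v) t =
      crossProd (onLt R) a b * sortWeight R (u ++ (b.sort ++ a.sort) ++ v) t := by
  have key := hR.sortWeight_unshuffle (p := fun x => decide (x ∈ a))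
    (Finset.sortedLT_sort (a ∪ b)).pairwise hm ht (by grind [Finset.mem_sort])
  rwa [sort_union_filter_mem, sort_union_filter_notMem hab] at key

lemma IsYangBaxter.sortWeight_sort_append_sort (hR : IsYangBaxter R) (hab : Disjoint a b)
    (hm : (u ++ (a ∪ b).sort ++ v).Nodup) (ht : t.Nodup)
    (h : ∀ x ∈ a, ∀ y ∈ b, y < x → [y, x] <+ t) :
    sortWeight R (u ++ (a.sort ++ b.sort) ++ v) t =
      crossProd (onGt R) a b * sortWeight R (u ++ (a ∪ b).sort ++ v) t := by
  have key := hR.sortWeight_shuffle (p := fun x => decide (x ∈ a))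
    (Finset.sortedLT_sort (a ∪ b)).pairwise hm ht (by grind [Finset.mem_sort])
  rwa [sort_union_filter_mem, sort_union_filter_notMem hab] at key

lemma pair_sublist_sort {s : Finset α} {x y : α} (hx : x ∈ s) (hy : y ∈ s) (hxy : x < y) :
    [x, y] <+ s.sort :=
  List.sublist_of_subperm_of_pairwise
    (List.subperm_of_subset (by simp [hxy.ne]) (by simp [hx, hy])) (by simp [hxy])
    (Finset.sortedLT_sort s).pairwise

lemma nodup_sort_append_sort (hab : Disjoint a b) : (a.sort ++ b.sort).Nodup :=
  (a.sort_nodup _).append (b.sort_nodup _)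
    (by simpa [List.Disjoint, Finset.disjoint_left] using hab)

lemma nodup_sort_append_sort_append_sort (hab : Disjoint a b) (hac : Disjoint a c)
    (hbc : Disjoint b c) : (a.sort ++ (b.sort ++ c.sort)).Nodup :=
  (a.sort_nodup _).append (nodup_sort_append_sort hbc) (by
    simp only [List.Disjoint, List.mem_append, Finset.mem_sort]
    exact fun x hx => Or.rec (Finset.disjoint_left.1 hab hx) (Finset.disjoint_left.1 hac hx))

/-- Both sides rearrange the increasing word on `a ∪ b ∪ c` into `c b a`. -/
lemma IsYangBaxter.crossProd_onLt_mul (hR : IsYangBaxter R) (hab : Disjoint a b)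
    (hac : Disjoint a c) (hbc : Disjoint b c) :
    crossProd (onLt R) (a ∪ b) c * crossProd (onLt R) a b =
      crossProd (onLt R) a (b ∪ c) * crossProd (onLt R) b c := by
  let t := c.sort ++ (b.sort ++ a.sort)
  have ht : t.Nodup := nodup_sort_append_sort_append_sort hbc.symm hac.symm hab.symm
  have habc : Disjoint (a ∪ b) c := Finset.disjoint_union_left.2 ⟨hac, hbc⟩
  have habc' : Disjoint a (b ∪ c) := Finset.disjoint_union_right.2 ⟨hab, hac⟩
  have hc : ∀ x ∈ a ∪ b, ∀ y ∈ c, [y, x] <+ t := fun x hx y hy =>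
    pair_sublist_append (by simpa using hy) (by simpa [or_comm] using hx)
  have hb : ∀ x ∈ a, ∀ y ∈ b, [y, x] <+ t := fun x hx y hy =>
    (pair_sublist_append (by simpa using hy) (by simpa using hx)).trans
      (List.sublist_append_right _ _)
  have h₁ := hR.sortWeight_union (u := []) (v := []) habc (by simp) ht hc
  have h₂ := hR.sortWeight_union (u := c.sort) (v := []) hab
    (by simpa using nodup_sort_append_sort habc.symm) ht hb
  have h₃ := hR.sortWeight_union (u := []) (v := []) habc' (by simp) ht (by grind)
  have h₄ := hR.sortWeight_union (u := []) (v := a.sort) hbc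
    (by simpa using nodup_sort_append_sort habc'.symm) ht (by grind)
  simp only [List.nil_append, List.append_nil, List.append_assoc, Finset.union_assoc]
    at h₁ h₂ h₃ h₄
  simpa [h₂, h₄, t, sortWeight_self] using h₁.symm.trans h₃

/-- Both sides rearrange the word `a b c` into the increasing word on `a ∪ b ∪ c`. -/
lemma IsYangBaxter.crossProd_onGt_mul (hR : IsYangBaxter R) (hab : Disjoint a b)
    (hac : Disjoint a c) (hbc : Disjoint b c) :
    crossProd (onGt R) a b * crossProd (onGt R) (a ∪ b) c =
      crossProd (onGt R) b c * crossProd (onGt R) a (b ∪ c) := by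
  let t := (a ∪ (b ∪ c)).sort
  have ht : t.Nodup := Finset.sort_nodup _ _
  have habc : Disjoint (a ∪ b) c := Finset.disjoint_union_left.2 ⟨hac, hbc⟩
  have habc' : Disjoint a (b ∪ c) := Finset.disjoint_union_right.2 ⟨hab, hac⟩
  have hlt : ∀ y ∈ a ∪ (b ∪ c), ∀ x ∈ a ∪ (b ∪ c), y < x → [y, x] <+ t :=
    fun y hy x hx => pair_sublist_sort hy hx
  have h₁ := hR.sortWeight_sort_append_sort (u := []) (v := c.sort) hab
    (by simpa using nodup_sort_append_sort habc) ht (by grind)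
  have h₂ := hR.sortWeight_sort_append_sort (u := []) (v := []) habc (by simp) ht (by grind)
  have h₃ := hR.sortWeight_sort_append_sort (u := a.sort) (v := []) hbc
    (by simpa using nodup_sort_append_sort habc') ht (by grind)
  have h₄ := hR.sortWeight_sort_append_sort (u := []) (v := []) habc' (by simp) ht (by grind)
  simp only [List.nil_append, List.append_nil, List.append_assoc, Finset.union_assoc]
    at h₁ h₂ h₃ h₄
  simpa [h₂, h₄, t, sortWeight_self] using h₁.symm.trans h₃

/-- Both sides rearrange the increasing word on `b ∪ c`, followed by `a`, into `a c b`. -/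
lemma IsYangBaxter.crossProd_mul_onLt (hR : IsYangBaxter R) (hab : Disjoint a b)
    (hac : Disjoint a c) (hbc : Disjoint b c) :
    crossProd R (b ∪ c) a * crossProd (onLt R) b c =
      crossProd (onLt R) b c * (crossProd R b a * crossProd R c a) := by
  let t := a.sort ++ (c.sort ++ b.sort)
  have ht : t.Nodup := nodup_sort_append_sort_append_sort hac hab hbc.symm
  have habc : Disjoint (b ∪ c) a := Finset.disjoint_union_left.2 ⟨hab.symm, hac.symm⟩
  have ha : ∀ x ∈ b ∪ c, ∀ y ∈ a, [y, x] <+ t := fun x hx y hy =>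
    pair_sublist_append (by simpa using hy) (by simpa [or_comm] using hx)
  have hc : ∀ x ∈ b, ∀ y ∈ c, [y, x] <+ t := fun x hx y hy =>
    (pair_sublist_append (by simpa using hy) (by simpa using hx)).trans
      (List.sublist_append_right _ _)
  have h₁ := hR.sortWeight_append_comm (b := (b ∪ c).sort) (c := a.sort) (u := []) (v := [])
    (by simpa using nodup_sort_append_sort habc) ht (by simpa using ha)
  have h₂ := hR.sortWeight_union (u := a.sort) (v := []) hbc
    (by simpa using nodup_sort_append_sort habc.symm) ht hc
  have h₃ := hR.sortWeight_union (u := []) (v := a.sort) hbc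
    (by simpa using nodup_sort_append_sort habc) ht hc
  have h₄ := hR.sortWeight_append_comm (b := b.sort) (c := a.sort) (u := c.sort) (v := [])
    (by simpa using nodup_sort_append_sort_append_sort hbc.symm hac.symm hab.symm) ht
    (by simp only [Finset.mem_sort]; grind)
  have h₅ := hR.sortWeight_append_comm (b := c.sort) (c := a.sort) (u := []) (v := b.sort)
    (by simpa using nodup_sort_append_sort_append_sort hac.symm hbc.symm hab) ht
    (by simp only [Finset.mem_sort]; grind)
  simp only [List.nil_append, List.append_nil, List.append_assoc] at h₁ h₂ h₃ h₄ h₅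
  simpa [h₂, h₄, h₅, t, sortWeight_self, crossProd] using h₁.symm.trans h₃

/-- Both sides rearrange the word `c a b` into the increasing word on `a ∪ b`, followed by `c`. -/
lemma IsYangBaxter.crossProd_onGt_mul_crossProd (hR : IsYangBaxter R) (hab : Disjoint a b)
    (hac : Disjoint a c) (hbc : Disjoint b c) :
    crossProd (onGt R) a b * crossProd R c (a ∪ b) =
      crossProd R c a * crossProd R c b * crossProd (onGt R) a b := by
  let t := (a ∪ b).sort ++ c.sort
  have habc : Disjoint (a ∪ b) c := Finset.disjoint_union_left.2 ⟨hac, hbc⟩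
  have ht : t.Nodup := nodup_sort_append_sort habc
  have hc : ∀ x ∈ c, ∀ y ∈ a ∪ b, [y, x] <+ t := fun x hx y hy =>
    pair_sublist_append (by simpa using hy) (by simpa using hx)
  have hlt : ∀ x ∈ a, ∀ y ∈ b, y < x → [y, x] <+ t := fun x hx y hy hyx =>
    (pair_sublist_sort (by simp [hy]) (by simp [hx]) hyx).trans (List.sublist_append_left _ _)
  have h₁ := hR.sortWeight_sort_append_sort (u := c.sort) (v := []) hab
    (by simpa using nodup_sort_append_sort habc.symm) ht hlt
  have h₂ := hR.sortWeight_append_comm (b := c.sort) (c := (a ∪ b).sort) (u := []) (v := [])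
    (by simpa using nodup_sort_append_sort habc.symm) ht (by simpa using hc)
  have h₃ := hR.sortWeight_append_comm (b := c.sort) (c := a.sort) (u := []) (v := b.sort)
    (by simpa using nodup_sort_append_sort_append_sort hac.symm hbc.symm hab) ht
    (by simp only [Finset.mem_sort]; grind)
  have h₄ := hR.sortWeight_append_comm (b := c.sort) (c := b.sort) (u := a.sort) (v := [])
    (by simpa using nodup_sort_append_sort_append_sort hac hab hbc.symm) ht
    (by simp only [Finset.mem_sort]; grind)
  have h₅ := hR.sortWeight_sort_append_sort (u := []) (v := c.sort) hab
    (by simpa using nodup_sort_append_sort habc) ht hlt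
  simp only [List.nil_append, List.append_nil, List.append_assoc] at h₁ h₂ h₃ h₄ h₅
  simpa [h₂, h₄, h₅, t, sortWeight_self, crossProd, mul_assoc] using h₁.symm.trans h₃

end Shuffles

section Embed

variable {K : Type*} [CommRing K] {n : ℕ}

lemma extend_comp_self {k N : ℕ} {ι : Fin k → Fin N} (hι : Function.Injective ι) (f : Idx n N) :
    Function.extend ι (f ∘ ι) f = f := by
  funext b
  by_cases hb : b ∈ Set.range ι
  · obtain ⟨i, rfl⟩ := hb
    exact hι.extend_apply _ _ i
  · exact Function.extend_apply' _ _ _ hb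

lemma embed_apply {k N : ℕ} (ι : Fin k → Fin N) (X : Matrix (Idx n k) (Idx n k) K)
    (f g : Idx n N) : embed ι X f g =
      if ∀ b ∉ Set.range ι, f b = g b then X (f ∘ ι) (g ∘ ι) else 0 := by
  simp [embed, ← ite_or, Finset.prod_boole, or_iff_not_imp_left]

lemma embed_mulVec {k N : ℕ} {ι : Fin k → Fin N} (hι : Function.Injective ι)
    (X : Matrix (Idx n k) (Idx n k) K) (φ : Idx n N → K) (f : Idx n N) :
    (embed ι X *ᵥ φ) f = ∑ w, X (f ∘ ι) w * φ (Function.extend ι w f) := by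
  symm
  refine Finset.sum_of_injOn (fun w => Function.extend ι w f)
    (Function.extend_injective hι f).injOn (by simp) ?_ ?_
  · intro g _ hg
    refine mul_eq_zero_of_left ((embed_apply ι X f g).trans (if_neg ?_)) _
    refine fun hfg => hg ⟨g ∘ ι, by simp, funext fun b => ?_⟩
    by_cases hb : b ∈ Set.range ι
    · obtain ⟨i, rfl⟩ := hb
      exact hι.extend_apply _ _ i
    · exact (Function.extend_apply' _ _ _ hb).trans (hfg b hb)
  · intro w _
    have hw : embed ι X f (Function.extend ι w f) = X (f ∘ ι) w := by
      rw [embed_apply, Function.extend_comp hι]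
      exact if_pos fun b hb => (Function.extend_apply' _ _ _ hb).symm
    exact congrArg (· * φ (Function.extend ι w f)) hw.symm

lemma embed_mul {k N : ℕ} {ι : Fin k → Fin N} (hι : Function.Injective ι)
    (X Y : Matrix (Idx n k) (Idx n k) K) : embed ι (X * Y) = embed ι X * embed ι Y := by
  refine Matrix.mulVec_injective (funext fun φ => funext fun f => ?_)
  have hext : ∀ v w, Function.extend ι v (Function.extend ι w f) = Function.extend ι v f :=
    fun v w => funext fun b => by by_cases hb : ∃ i, ι i = b <;> simp [Function.extend_def, hb]
  simp only [← Matrix.mulVec_mulVec, embed_mulVec hι, Function.extend_comp hι, hext,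
    Matrix.mul_apply, Finset.sum_mul, Finset.mul_sum, mul_assoc]
  exact Finset.sum_comm

lemma embed_one {k N : ℕ} {ι : Fin k → Fin N} (hι : Function.Injective ι) :
    embed ι (1 : Matrix (Idx n k) (Idx n k) K) = 1 := by
  refine Matrix.mulVec_injective (funext fun φ => funext fun f => ?_)
  simp [embed_mulVec hι, Matrix.one_apply, extend_comp_self hι]

/-- `embed ι` as a ring homomorphism `End(V^{⊗k}) → End(V^{⊗N})`. -/
def embedHom {k N : ℕ} {ι : Fin k → Fin N} (hι : Function.Injective ι) :
    Matrix (Idx n k) (Idx n k) K →+* Matrix (Idx n N) (Idx n N) K where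
  toFun := embed ι
  map_one' := embed_one hι
  map_mul' := embed_mul hι
  map_zero' := by ext f g; simp [embed]
  map_add' X Y := by ext f g; simp [embed, add_mul]

lemma embed_comp {k M N : ℕ} {ι : Fin M → Fin N} (hι : Function.Injective ι) (κ : Fin k → Fin M)
    (X : Matrix (Idx n k) (Idx n k) K) : embed ι (embed κ X) = embed (ι ∘ κ) X := by
  ext f g
  rw [embed_apply, embed_apply, embed_apply, ← ite_and]
  refine if_congr ⟨fun ⟨h, h'⟩ b hb => ?_, fun h => ⟨fun b hb => h b ?_, fun b hb => h _ ?_⟩⟩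
    rfl rfl
  · by_cases hb' : b ∈ Set.range ι
    · obtain ⟨i, rfl⟩ := hb'
      exact h' i fun ⟨j, hj⟩ => hb ⟨j, congrArg ι hj⟩
    · exact h b hb'
  · exact fun ⟨j, hj⟩ => hb ⟨κ j, hj⟩
  · exact fun ⟨j, hj⟩ => hb ⟨j, hι hj⟩

lemma embed_id {N : ℕ} (X : Matrix (Idx n N) (Idx n N) K) : embed id X = X := by
  ext f g
  simp [embed_apply]

lemma embed_commute {k l N : ℕ} {ι : Fin k → Fin N} {κ : Fin l → Fin N}
    (hι : Function.Injective ι) (hκ : Function.Injective κ) (hικ : ∀ i j, ι i ≠ κ j)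
    (X : Matrix (Idx n k) (Idx n k) K) (Y : Matrix (Idx n l) (Idx n l) K) :
    Commute (embed ι X) (embed κ Y) := by
  refine Matrix.mulVec_injective (funext fun φ => funext fun f => ?_)
  have hoff : ∀ w, Function.extend ι w f ∘ κ = f ∘ κ := fun w => funext fun j =>
    Function.extend_apply' _ _ _ fun ⟨i, hi⟩ => hικ i j hi
  have hoff' : ∀ v, Function.extend κ v f ∘ ι = f ∘ ι := fun v => funext fun i =>
    Function.extend_apply' _ _ _ fun ⟨j, hj⟩ => hικ i j hj.symm
  have hext : ∀ v w, Function.extend κ v (Function.extend ι w f) =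
      Function.extend ι w (Function.extend κ v f) := fun v w => funext fun b => by
    by_cases hb : ∃ i, ι i = b
    · obtain ⟨i, rfl⟩ := hb
      have hi : ¬∃ j, κ j = ι i := fun ⟨j, hj⟩ => hικ i j hj.symm
      rw [hι.extend_apply, Function.extend_apply' _ _ _ hi, hι.extend_apply]
    · rw [Function.extend_apply' _ _ b hb]
      by_cases hb' : ∃ j, κ j = b <;> simp [Function.extend_def, hb, hb']
  simp only [← Matrix.mulVec_mulVec, embed_mulVec hι, embed_mulVec hκ, hoff, hoff', hext,
    Finset.mul_sum]
  rw [Finset.sum_comm]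
  simp only [mul_left_comm]

end Embed

section RMatrix

variable {K : Type*} [Field K] {n : ℕ}

/-- The coefficient of `e_u ⊗ e_v` in `R(x) (e_u ⊗ e_v)`. -/
def diagCoeff (q x : K) (u v : Fin n) : K := if u = v then (q - x * q⁻¹) / (1 - x) else 1

/-- The coefficient of the entry of `R(x)` exchanging `e_u ⊗ e_v` and `e_v ⊗ e_u`. -/
def swapCoeff (q x : K) (u v : Fin n) : K :=
  if u = v then 0 else (q - q⁻¹) * (if u < v then x else 1) / (1 - x)

lemma RmI_apply (q x : K) (u v : Idx n 2) : RmI n q x u v =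
    (if v = u then diagCoeff q x (u 0) (u 1) else 0) +
      if v = u ∘ Equiv.swap 0 1 then swapCoeff q x (u 0) (u 1) else 0 := by
  have hswap : v = u ∘ Equiv.swap 0 1 ↔ v 0 = u 1 ∧ v 1 = u 0 := by
    simp [funext_iff, Fin.forall_fin_two]
  simp only [RmI, diagCoeff, swapCoeff, hswap, eq_comm (a := u) (b := v)]
  by_cases h : u 0 = u 1 <;> simp [h]

lemma injective_pair {α : Type*} {i j : α} (hij : i ≠ j) : Function.Injective ![i, j] := by
  simp [Function.Injective, Fin.forall_fin_two, hij, hij.symm]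

lemma embed_RmI_mulVec {N : ℕ} (q x : K) {i j : Fin N} (hij : i ≠ j) (φ : Idx n N → K)
    (f : Idx n N) : (embed ![i, j] (RmI n q x) *ᵥ φ) f =
      diagCoeff q x (f i) (f j) * φ f + swapCoeff q x (f i) (f j) * φ (f ∘ Equiv.swap i j) := by
  have hinj := injective_pair hij
  have hswap : Function.extend ![i, j] ((f ∘ ![i, j]) ∘ Equiv.swap 0 1) f =
      f ∘ Equiv.swap i j := by
    refine Eq.trans ?_ (extend_comp_self hinj (f ∘ Equiv.swap i j))
    funext b
    by_cases hb : ∃ a, ![i, j] a = b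
    · obtain ⟨a, rfl⟩ := hb
      rw [hinj.extend_apply, hinj.extend_apply]
      fin_cases a <;> simp
    · rw [Function.extend_apply' _ _ _ hb, Function.extend_apply' _ _ _ hb]
      rw [Fin.exists_fin_two, not_or] at hb
      exact congrArg f (Equiv.swap_apply_of_ne_of_ne (Ne.symm hb.1) (Ne.symm hb.2)).symm
  simp [embed_mulVec hinj, RmI_apply, add_mul, Finset.sum_add_distrib, extend_comp_self hinj, hswap]

lemma embed_RmI_braid_three {q x y w : K} (hq : q ≠ 0) (hx : 1 - x ≠ 0) (hy : 1 - y ≠ 0)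
    (hw : 1 - w ≠ 0) (hxy : x * y = w) :
    (embed ![0, 1] (RmI n q x) * embed ![0, 2] (RmI n q w) * embed ![1, 2] (RmI n q y) :
        Matrix (Idx n 3) (Idx n 3) K) =
      embed ![1, 2] (RmI n q y) * embed ![0, 2] (RmI n q w) * embed ![0, 1] (RmI n q x) := by
  refine Matrix.mulVec_injective (funext fun φ => funext fun f => ?_)
  obtain ⟨t, u, v, rfl⟩ : ∃ t u v, f = ![t, u, v] :=
    ⟨f 0, f 1, f 2, funext fun i => by fin_cases i <;> rfl⟩
  have h₀₁ (t u v : Fin n) : ![t, u, v] ∘ Equiv.swap (0 : Fin 3) 1 = ![u, t, v] :=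
    funext fun i => by fin_cases i <;> rfl
  have h₀₂ (t u v : Fin n) : ![t, u, v] ∘ Equiv.swap (0 : Fin 3) 2 = ![v, u, t] :=
    funext fun i => by fin_cases i <;> rfl
  have h₁₂ (t u v : Fin n) : ![t, u, v] ∘ Equiv.swap (1 : Fin 3) 2 = ![t, v, u] :=
    funext fun i => by fin_cases i <;> rfl
  simp only [← Matrix.mulVec_mulVec,
    embed_RmI_mulVec q _ (show (0 : Fin 3) ≠ 1 by decide),
    embed_RmI_mulVec q _ (show (0 : Fin 3) ≠ 2 by decide),
    embed_RmI_mulVec q _ (show (1 : Fin 3) ≠ 2 by decide), h₀₁, h₀₂, h₁₂, Matrix.cons_val,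
    diagCoeff, swapCoeff]
  rcases lt_trichotomy t u with htu | htu | htu <;>
  rcases lt_trichotomy u v with huv | huv | huv <;>
  rcases lt_trichotomy t v with htv | htv | htv <;>
  first
  | omega
  | simp only [htu, huv, htv, ne_of_lt, ne_of_gt, not_lt_of_gt, lt_irrefl, if_true, if_false]
    field_simp
    try (subst hxy; ring)

end RMatrix

section SpectralParameters

variable {K : Type*} [Field K] {n N : ℕ} {q qbar : K}

lemma comp_pair {M : ℕ} (e : Fin M → Fin N) (i j : Fin M) : e ∘ ![i, j] = ![e i, e j] := by
  funext k
  fin_cases k <;> rfl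

lemma embed_RmI_braid {wi wj wk : K} (hq : q ≠ 0) (hj : wj ≠ 0) (hk : wk ≠ 0)
    (hij : wi ≠ wj) (hik : wi ≠ wk) (hjk : wj ≠ wk) {i j k : Fin N} (hij' : i ≠ j) (hik' : i ≠ k)
    (hjk' : j ≠ k) :
    embed ![i, j] (RmI n q (wi / wj)) * embed ![i, k] (RmI n q (wi / wk)) *
        embed ![j, k] (RmI n q (wj / wk)) =
      embed ![j, k] (RmI n q (wj / wk)) * embed ![i, k] (RmI n q (wi / wk)) *
        embed ![i, j] (RmI n q (wi / wj)) := by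
  have hinj : Function.Injective ![i, j, k] := by
    simp [Function.Injective, Fin.forall_fin_succ, hij', hik', hjk', hij'.symm, hik'.symm,
      hjk'.symm]
  have hsub {a b : K} (hb : b ≠ 0) (hab : a ≠ b) : 1 - a / b ≠ 0 :=
    sub_ne_zero.2 fun h => hab ((div_eq_one_iff_eq hb).1 h.symm)
  have := congrArg (embed ![i, j, k]) (embed_RmI_braid_three (n := n) hq (hsub hj hij)
    (hsub hk hjk) (hsub hk hik) (div_mul_div_cancel₀ hj))
  simpa only [embed_mul hinj, embed_comp hinj, comp_pair, Matrix.cons_val] using this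

/-- `R_{ij}(w_i / w_j)`, the R-matrix acting on the tensor factors `i` and `j`. -/
def rAt (n : ℕ) (q : K) (w : Fin N → K) (i j : Fin N) : Matrix (Idx n N) (Idx n N) K :=
  embed ![i, j] (RmI n q (w i / w j))

/-- `R̃_{ij}(z_i / z_j)`, the matrix `R̃` acting on the tensor factors `i` and `j`. -/
def rTildeAt (n : ℕ) (q qbar : K) (z : Fin N → K) (i j : Fin N) : Matrix (Idx n N) (Idx n N) K :=
  embed ![i, j] (RtI n q qbar (z i / z j))

lemma isYangBaxter_rAt (hq : q ≠ 0) {w : Fin N → K} (hw₀ : ∀ i, w i ≠ 0)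
    (hw : Function.Injective w) : IsYangBaxter (rAt n q w) where
  commute hij hkl hik hil hjk hjl := by
    refine embed_commute (injective_pair hij) (injective_pair hkl) (fun a b => ?_) _ _
    fin_cases a <;> fin_cases b <;> assumption
  braid hij hik hjk :=
    embed_RmI_braid hq (hw₀ _) (hw₀ _) (hw.ne hij) (hw.ne hik) (hw.ne hjk) hij hik hjk

lemma rTildeAt_eq (z : Fin N → K) {i j : Fin N} (hij : i ≠ j) :
    rTildeAt n q qbar z i j = embed ![j, i] (RmI n q (z j / (z i * qbar ^ 2))) := by
  have hswap (x : K) : RtI n q qbar x = embed (Equiv.swap 0 1) (RmI n q (x * qbar ^ 2)⁻¹) := by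
    ext u v
    exact ((embed_apply _ _ u v).trans
      (if_pos fun b hb => absurd ((Equiv.swap 0 1).surjective b) hb)).symm
  have hpair : ![i, j] ∘ Equiv.swap 0 1 = ![j, i] := by
    funext a
    fin_cases a <;> rfl
  rw [rTildeAt, hswap, embed_comp (injective_pair hij), hpair, div_mul_eq_mul_div, inv_div]

/-- The spectral parameters with `z i` replaced by `z i * qbar ^ 2` for `i ∈ s`. -/
def shift (qbar : K) (z : Fin N → K) (s : Finset (Fin N)) (i : Fin N) : K :=
  if i ∈ s then z i * qbar ^ 2 else z i

variable {z : Fin N → K} {s : Finset (Fin N)} {i j : Fin N}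

lemma GoodZ.injective (hz : GoodZ qbar z) : Function.Injective z :=
  fun i j => not_imp_not.1 (hz.2.1 i j)

lemma isYangBaxter_rAt_shift (hq : q ≠ 0) (hqb : qbar ≠ 0) (hz : GoodZ qbar z)
    (s : Finset (Fin N)) : IsYangBaxter (rAt n q (shift qbar z s)) := by
  have hinj := hz.injective
  obtain ⟨hz₀, -, hzq⟩ := hz
  have hqb₂ : qbar ^ 2 ≠ 0 := pow_ne_zero 2 hqb
  refine isYangBaxter_rAt hq (fun i => ?_) fun i j hij => ?_
  · rw [shift]
    split_ifs
    exacts [mul_ne_zero (hz₀ i) hqb₂, hz₀ i]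
  · by_contra hne
    simp only [shift] at hij
    split_ifs at hij
    · exact hne (hinj (mul_right_cancel₀ hqb₂ hij))
    · exact hzq i j hne hij
    · exact hzq j i (Ne.symm hne) hij.symm
    · exact hne (hinj hij)

lemma rAt_shift_of_mem (hqb : qbar ≠ 0) (hi : i ∈ s) (hj : j ∈ s) :
    rAt n q (shift qbar z s) i j = rAt n q z i j := by
  simp only [rAt, shift, if_pos hi, if_pos hj, mul_div_mul_right _ _ (pow_ne_zero 2 hqb)]

lemma rAt_shift_of_notMem (hi : i ∉ s) (hj : j ∉ s) :
    rAt n q (shift qbar z s) i j = rAt n q z i j := by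
  simp only [rAt, shift, if_neg hi, if_neg hj]

lemma rAt_shift_of_notMem_of_mem (hj : j ∉ s) (hi : i ∈ s) :
    rAt n q (shift qbar z s) j i = rTildeAt n q qbar z i j := by
  rw [rTildeAt_eq z (ne_of_mem_of_not_mem hi hj), rAt, shift, shift, if_pos hi, if_neg hj]

/-- `∏ R_{ij}(z_i / z_j)` over `i ∈ a`, `j ∈ b` with `i < j`. -/
def ltProd (n : ℕ) (q : K) (z : Fin N → K) (a b : Finset (Fin N)) :
    Matrix (Idx n N) (Idx n N) K :=
  crossProd (onLt (rAt n q z)) a b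

/-- `∏ R_{ij}(z_i / z_j)` over `i ∈ a`, `j ∈ b` with `i > j`. -/
def gtProd (n : ℕ) (q : K) (z : Fin N → K) (a b : Finset (Fin N)) :
    Matrix (Idx n N) (Idx n N) K :=
  crossProd (onGt (rAt n q z)) a b

/-- `∏ R̃_{ij}(z_i / z_j)` over `i ∈ a`, `j ∈ b`, in the order opposite to `ltProd`. -/
def midProd (n : ℕ) (q qbar : K) (z : Fin N → K) (a b : Finset (Fin N)) :
    Matrix (Idx n N) (Idx n N) K :=
  crossProd (fun j i => rTildeAt n q qbar z i j) b a

variable {a b c : Finset (Fin N)}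

lemma crossProd_rAt_shift (has : a ⊆ s) (hbs : Disjoint b s) :
    crossProd (rAt n q (shift qbar z s)) b a = midProd n q qbar z a b :=
  crossProd_congr fun _ hj _ hi =>
    rAt_shift_of_notMem_of_mem (Finset.disjoint_left.1 hbs hj) (has hi)

lemma ltProd_shift (has : Disjoint a s) (hbs : Disjoint b s) :
    ltProd n q (shift qbar z s) a b = ltProd n q z a b :=
  crossProd_congr fun _ hi _ hj => by
    simp only [onLt,
      rAt_shift_of_notMem (Finset.disjoint_left.1 has hi) (Finset.disjoint_left.1 hbs hj)]

lemma gtProd_shift (hqb : qbar ≠ 0) (has : a ⊆ s) (hbs : b ⊆ s) :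
    gtProd n q (shift qbar z s) a b = gtProd n q z a b :=
  crossProd_congr fun _ hi _ hj => by
    simp only [onGt, rAt_shift_of_mem hqb (has hi) (hbs hj)]

lemma ltProd_mul_ltProd (hq : q ≠ 0) (hz : GoodZ qbar z) (hab : Disjoint a b)
    (hac : Disjoint a c) (hbc : Disjoint b c) :
    ltProd n q z (a ∪ b) c * ltProd n q z a b = ltProd n q z a (b ∪ c) * ltProd n q z b c :=
  (isYangBaxter_rAt hq hz.1 hz.injective).crossProd_onLt_mul hab hac hbc

lemma gtProd_mul_gtProd (hq : q ≠ 0) (hz : GoodZ qbar z) (hab : Disjoint a b)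
    (hac : Disjoint a c) (hbc : Disjoint b c) :
    gtProd n q z a b * gtProd n q z (a ∪ b) c = gtProd n q z b c * gtProd n q z a (b ∪ c) :=
  (isYangBaxter_rAt hq hz.1 hz.injective).crossProd_onGt_mul hab hac hbc

lemma midProd_mul_ltProd (hq : q ≠ 0) (hqb : qbar ≠ 0) (hz : GoodZ qbar z) (hab : Disjoint a b)
    (hac : Disjoint a c) (hbc : Disjoint b c) :
    midProd n q qbar z a (b ∪ c) * ltProd n q z b c =
      ltProd n q z b c * (midProd n q qbar z a b * midProd n q qbar z a c) := by
  have hbca := Finset.disjoint_union_left.2 ⟨hab.symm, hac.symm⟩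
  rw [← ltProd_shift (qbar := qbar) hab.symm hac.symm, ← crossProd_rAt_shift subset_rfl hbca,
    ← crossProd_rAt_shift subset_rfl hab.symm, ← crossProd_rAt_shift subset_rfl hac.symm]
  exact (isYangBaxter_rAt_shift hq hqb hz a).crossProd_mul_onLt hab hac hbc

lemma gtProd_mul_midProd (hq : q ≠ 0) (hqb : qbar ≠ 0) (hz : GoodZ qbar z) (hab : Disjoint a b)
    (hac : Disjoint a c) (hbc : Disjoint b c) :
    gtProd n q z a b * midProd n q qbar z (a ∪ b) c =
      midProd n q qbar z a c * midProd n q qbar z b c * gtProd n q z a b := by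
  have ha : a ⊆ a ∪ b := Finset.subset_union_left
  have hb : b ⊆ a ∪ b := Finset.subset_union_right
  have hc : Disjoint c (a ∪ b) := Finset.disjoint_union_right.2 ⟨hac.symm, hbc.symm⟩
  rw [← gtProd_shift hqb ha hb, ← crossProd_rAt_shift subset_rfl hc, ← crossProd_rAt_shift ha hc,
    ← crossProd_rAt_shift hb hc]
  exact (isYangBaxter_rAt_shift hq hqb hz (a ∪ b)).crossProd_onGt_mul_crossProd hab hac hbc

end SpectralParameters

section ShuffleProduct

lemma sum_powerset_powerset_sdiff {α M : Type*} [DecidableEq α] [AddCommMonoid M]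
    (s : Finset α) (F : Finset α → Finset α → Finset α → M) :
    ∑ u ∈ s.powerset, ∑ a ∈ u.powerset, F a (u \ a) (s \ u) =
      ∑ a ∈ s.powerset, ∑ b ∈ (s \ a).powerset, F a b ((s \ a) \ b) := by
  rw [Finset.sum_sigma', Finset.sum_sigma']
  refine Finset.sum_bij' (fun x _ => ⟨x.2, x.1 \ x.2⟩) (fun x _ => ⟨x.1 ∪ x.2, x.1⟩)
    ?_ ?_ ?_ ?_ ?_
  all_goals
    rintro ⟨x, y⟩ h
    simp only [Finset.mem_sigma, Finset.mem_powerset] at h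
  · grind
  · grind
  · simp [Finset.union_sdiff_of_subset h.2]
  · simp [Finset.union_sdiff_cancel_left (Finset.disjoint_sdiff.mono_right h.2)]
  · simp only [sdiff_sdiff_sdiff_cancel_right h.2]

variable {K : Type*} [Field K] {n k l m N : ℕ} {q qbar : K}

/-- The matrix `A_s(z_s)`: the value of `A` at the parameters in `s`, acting on the tensor factors
in `s`. It is zero when `s` does not have exactly `k` elements. -/
def place (z : Fin N → K) (s : Finset (Fin N)) (A : (Fin k → K) → Matrix (Idx n k) (Idx n k) K) :
    Matrix (Idx n N) (Idx n N) K :=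
  if h : s.card = k then embed (s.orderEmbOfFin h) (A (z ∘ s.orderEmbOfFin h)) else 0

/-- The summand of the shuffle product `A * B` in which `A` acts on the tensor factors in `s` and
`B` on those in `t`. -/
def summand (q qbar : K) (z : Fin N → K) (s t : Finset (Fin N))
    (A : (Fin k → K) → Matrix (Idx n k) (Idx n k) K)
    (B : (Fin l → K) → Matrix (Idx n l) (Idx n l) K) : Matrix (Idx n N) (Idx n N) K :=
  ltProd n q z s t * place z s A * midProd n q qbar z s t * place z t B * gtProd n q z s t

variable (A : (Fin k → K) → Matrix (Idx n k) (Idx n k) K)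
  (B : (Fin l → K) → Matrix (Idx n l) (Idx n l) K)
  (C : (Fin m → K) → Matrix (Idx n m) (Idx n m) K)

lemma place_of_card_ne (z : Fin N → K) {s : Finset (Fin N)} (hs : s.card ≠ k) :
    place z s A = 0 :=
  dif_neg hs

lemma summand_of_card_left_ne (z : Fin N → K) {s : Finset (Fin N)} (t : Finset (Fin N))
    (hs : s.card ≠ k) : summand q qbar z s t A B = 0 := by
  simp [summand, place_of_card_ne A z hs]

lemma summand_of_card_right_ne (z : Fin N → K) (s : Finset (Fin N)) {t : Finset (Fin N)}
    (ht : t.card ≠ l) : summand q qbar z s t A B = 0 := by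
  simp [summand, place_of_card_ne B z ht]

lemma shufS_eq_sum_summand (z : Fin (k + l) → K) :
    shufS n q qbar A B z = ∑ s, summand q qbar z s sᶜ A B := by
  have hcard {s : Finset (Fin (k + l))} (hs : s.card = k) : sᶜ.card = l := by
    rw [Finset.card_compl, hs, Fintype.card_fin, Nat.add_sub_cancel_left]
  rw [← Finset.sum_filter_of_ne (p := fun s => s.card = k) fun s _ hne =>
      not_imp_comm.1 (summand_of_card_left_ne A B z sᶜ) hne,
    Finset.sum_subtype (p := fun s => s.card = k) _ (by simp)]
  refine Finset.sum_congr rfl fun s _ => ?_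
  rw [summand, place, place, dif_pos s.2, dif_pos (hcard s.2), ltProd, midProd, gtProd,
    crossProd_eq_pairProd _ s.2 (hcard s.2), crossProd_eq_pairProd _ s.2 (hcard s.2),
    crossProd_eq_pairProd _ (hcard s.2) s.2]
  rfl

section OrderEmbedding

variable {M : ℕ} (e : Fin M ↪o Fin N) (z : Fin N → K) (s t : Finset (Fin M))

lemma embed_rAt (i j : Fin M) : embed e (rAt n q (z ∘ e) i j) = rAt n q z (e i) (e j) := by
  rw [rAt, embed_comp e.injective, comp_pair]
  rfl

lemma embed_rTildeAt (i j : Fin M) :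
    embed e (rTildeAt n q qbar (z ∘ e) i j) = rTildeAt n q qbar z (e i) (e j) := by
  rw [rTildeAt, embed_comp e.injective, comp_pair]
  rfl

lemma embed_ltProd : embed e (ltProd n q (z ∘ e) s t) =
    ltProd n q z (s.map e.toEmbedding) (t.map e.toEmbedding) := by
  refine map_crossProd (F := onLt (rAt n q (z ∘ e))) (G := onLt (rAt n q z))
    (embedHom (n := n) (K := K) e.injective : _ →* _) e (fun i j => ?_) s t
  simp only [onLt, e.lt_iff_lt]
  split_ifs
  exacts [embed_rAt e z i j, embed_one e.injective]

lemma embed_gtProd : embed e (gtProd n q (z ∘ e) s t) =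
    gtProd n q z (s.map e.toEmbedding) (t.map e.toEmbedding) := by
  refine map_crossProd (F := onGt (rAt n q (z ∘ e))) (G := onGt (rAt n q z))
    (embedHom (n := n) (K := K) e.injective : _ →* _) e (fun i j => ?_) s t
  simp only [onGt, e.lt_iff_lt]
  split_ifs
  exacts [embed_rAt e z i j, embed_one e.injective]

lemma embed_midProd : embed e (midProd n q qbar (z ∘ e) s t) =
    midProd n q qbar z (s.map e.toEmbedding) (t.map e.toEmbedding) :=
  map_crossProd (F := fun j i => rTildeAt n q qbar (z ∘ e) i j)
    (G := fun j i => rTildeAt n q qbar z i j)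
    (embedHom (n := n) (K := K) e.injective : _ →* _) e (fun j i => embed_rTildeAt e z i j) t s

lemma embed_place : embed e (place (z ∘ e) s A) = place z (s.map e.toEmbedding) A := by
  by_cases hs : s.card = k
  · have hs' : (s.map e.toEmbedding).card = k := (Finset.card_map _).trans hs
    have hcomp : e ∘ s.orderEmbOfFin hs = (s.map e.toEmbedding).orderEmbOfFin hs' :=
      Finset.orderEmbOfFin_unique hs' (by simp)
        (e.strictMono.comp (s.orderEmbOfFin hs).strictMono)
    rw [place, place, dif_pos hs, dif_pos hs', embed_comp e.injective, ← hcomp]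
    rfl
  · rw [place_of_card_ne A _ hs, place_of_card_ne A _ (by simpa using hs)]
    exact map_zero (embedHom e.injective)

lemma embed_summand : embed e (summand q qbar (z ∘ e) s t A B) =
    summand q qbar z (s.map e.toEmbedding) (t.map e.toEmbedding) A B := by
  simp only [summand, embed_mul e.injective, embed_ltProd, embed_midProd, embed_gtProd, embed_place]

lemma embed_shufS (e : Fin (k + l) ↪o Fin N) : embed e (shufS n q qbar A B (z ∘ e)) =
    ∑ t ∈ (Finset.univ.map e.toEmbedding).powerset,
      summand q qbar z t (Finset.univ.map e.toEmbedding \ t) A B := by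
  rw [shufS_eq_sum_summand]
  refine (map_sum (embedHom e.injective) _ _).trans ?_
  refine Finset.sum_bij (fun t _ => t.map e.toEmbedding) (fun t _ => ?_) ?_ ?_ ?_
  · exact Finset.mem_powerset.2 (Finset.map_subset_map.2 (Finset.subset_univ t))
  · exact fun t _ t' _ h => Finset.map_injective _ h
  · intro t ht
    obtain ⟨u, -, rfl⟩ := Finset.subset_map_iff.1 (Finset.mem_powerset.1 ht)
    exact ⟨u, Finset.mem_univ u, rfl⟩
  · intro t _
    have hcompl : (tᶜ).map e.toEmbedding =
        Finset.univ.map e.toEmbedding \ t.map e.toEmbedding := by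
      rw [Finset.compl_eq_univ_sdiff, Finset.map_sdiff]
    exact (embed_summand A B e z t tᶜ).trans (by rw [hcompl])

end OrderEmbedding

lemma place_shufS (z : Fin N → K) (s : Finset (Fin N)) :
    place z s (shufS n q qbar A B) = ∑ t ∈ s.powerset, summand q qbar z t (s \ t) A B := by
  by_cases hs : s.card = k + l
  · have := embed_shufS (q := q) (qbar := qbar) A B z (s.orderEmbOfFin hs)
    rw [Finset.map_orderEmbOfFin_univ] at this
    rw [place, dif_pos hs, this]
  · rw [place_of_card_ne _ z hs]
    refine (Finset.sum_eq_zero fun t ht => ?_).symm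
    by_cases htk : t.card = k
    · refine summand_of_card_right_ne A B z t fun hl => hs ?_
      rw [← htk, ← hl, add_comm, Finset.card_sdiff_add_card_eq_card (Finset.mem_powerset.1 ht)]
    · exact summand_of_card_left_ne A B z _ htk

lemma place_univ (h : k = N) (z : Fin N → K) :
    place z Finset.univ A = recastM n h (A fun i => z (Fin.cast h i)) := by
  subst h
  have hcard := Finset.card_fin k
  have hid : id = ⇑(Finset.univ.orderEmbOfFin hcard) :=
    Finset.orderEmbOfFin_unique hcard (fun _ => Finset.mem_univ _) strictMono_id
  rw [place, dif_pos hcard, ← hid, embed_id]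
  rfl

lemma place_univ_self (z : Fin k → K) : place z Finset.univ A = A z :=
  place_univ A rfl z

lemma place_empty_oneS (z : Fin N → K) : place z ∅ (oneS n) = 1 := by
  rw [place, dif_pos Finset.card_empty]
  exact embed_one (Finset.orderEmbOfFin _ _).injective

variable {z : Fin N → K} {a b c s : Finset (Fin N)}

lemma place_commute_embed_pair {i j : Fin N} (hij : i ≠ j) (hi : i ∉ s) (hj : j ∉ s)
    (X : Matrix (Idx n 2) (Idx n 2) K) : Commute (place z s A) (embed ![i, j] X) := by
  by_cases hs : s.card = k
  · rw [place, dif_pos hs]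
    refine embed_commute (s.orderEmbOfFin hs).injective (injective_pair hij) (fun a b => ?_) _ _
    refine ne_of_mem_of_not_mem (s.orderEmbOfFin_mem hs a) ?_
    fin_cases b <;> assumption
  · exact place_of_card_ne A z hs ▸ Commute.zero_left _

lemma place_commute_ltProd (hab : Disjoint a b) (hsa : Disjoint s a) (hsb : Disjoint s b) :
    Commute (place z s A) (ltProd n q z a b) :=
  commute_crossProd fun i hi j hj => by
    rw [onLt]
    split_ifs
    · exact place_commute_embed_pair A (hab.forall_ne_finset hi hj)
        (Finset.disjoint_right.1 hsa hi) (Finset.disjoint_right.1 hsb hj) _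
    · exact Commute.one_right _

lemma place_commute_gtProd (hab : Disjoint a b) (hsa : Disjoint s a) (hsb : Disjoint s b) :
    Commute (place z s A) (gtProd n q z a b) :=
  commute_crossProd fun i hi j hj => by
    rw [onGt]
    split_ifs
    · exact place_commute_embed_pair A (hab.forall_ne_finset hi hj)
        (Finset.disjoint_right.1 hsa hi) (Finset.disjoint_right.1 hsb hj) _
    · exact Commute.one_right _

lemma place_commute_midProd (hab : Disjoint a b) (hsa : Disjoint s a) (hsb : Disjoint s b) :
    Commute (place z s A) (midProd n q qbar z a b) :=
  commute_crossProd fun _ hj _ hi => place_commute_embed_pair A (hab.forall_ne_finset hi hj)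
    (Finset.disjoint_right.1 hsa hi) (Finset.disjoint_right.1 hsb hj) _

lemma summand_assoc (hq : q ≠ 0) (hqb : qbar ≠ 0) (hz : GoodZ qbar z) (hab : Disjoint a b)
    (hac : Disjoint a c) (hbc : Disjoint b c) :
    ltProd n q z (a ∪ b) c * summand q qbar z a b A B * midProd n q qbar z (a ∪ b) c *
        place z c C * gtProd n q z (a ∪ b) c =
      ltProd n q z a (b ∪ c) * place z a A * midProd n q qbar z a (b ∪ c) *
        summand q qbar z b c B C * gtProd n q z a (b ∪ c) := by
  have hA : Commute (place z a A) (ltProd n q z b c) := place_commute_ltProd A hbc hab hac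
  have hB : Commute (place z b B) (midProd n q qbar z a c) :=
    place_commute_midProd B hac hab.symm hbc
  have hC : Commute (place z c C) (gtProd n q z a b) :=
    place_commute_gtProd C hab hac.symm hbc.symm
  calc
    _ = ltProd n q z (a ∪ b) c * ltProd n q z a b * place z a A * midProd n q qbar z a b *
          place z b B * (gtProd n q z a b * midProd n q qbar z (a ∪ b) c) * place z c C *
          gtProd n q z (a ∪ b) c := by
      simp only [summand, mul_assoc]
    _ = ltProd n q z a (b ∪ c) * (ltProd n q z b c * place z a A) * midProd n q qbar z a b *
          (place z b B * midProd n q qbar z a c) * midProd n q qbar z b c *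
          (gtProd n q z a b * place z c C) * gtProd n q z (a ∪ b) c := by
      rw [ltProd_mul_ltProd hq hz hab hac hbc, gtProd_mul_midProd hq hqb hz hab hac hbc]
      simp only [mul_assoc]
    _ = ltProd n q z a (b ∪ c) * place z a A *
          (ltProd n q z b c * (midProd n q qbar z a b * midProd n q qbar z a c)) * place z b B *
          midProd n q qbar z b c * place z c C *
          (gtProd n q z a b * gtProd n q z (a ∪ b) c) := by
      rw [← hA.eq, hB.eq, ← hC.eq]
      simp only [mul_assoc]
    _ = _ := by
      rw [← midProd_mul_ltProd hq hqb hz hab hac hbc, gtProd_mul_gtProd hq hz hab hac hbc]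
      simp only [summand, mul_assoc]

lemma place_shufS_assoc (hq : q ≠ 0) (hqb : qbar ≠ 0) (hz : GoodZ qbar z)
    (s : Finset (Fin N)) :
    place z s (shufS n q qbar (shufS n q qbar A B) C) =
      place z s (shufS n q qbar A (shufS n q qbar B C)) := by
  let F (a b c : Finset (Fin N)) := ltProd n q z (a ∪ b) c * summand q qbar z a b A B *
    midProd n q qbar z (a ∪ b) c * place z c C * gtProd n q z (a ∪ b) c
  rw [place_shufS, place_shufS]
  calc
    _ = ∑ u ∈ s.powerset, ∑ a ∈ u.powerset, F a (u \ a) (s \ u) := by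
      refine Finset.sum_congr rfl fun u _ => ?_
      rw [summand, place_shufS]
      simp only [Finset.mul_sum, Finset.sum_mul]
      refine Finset.sum_congr rfl fun a ha => ?_
      simp only [F, Finset.union_sdiff_of_subset (Finset.mem_powerset.1 ha)]
    _ = ∑ a ∈ s.powerset, ∑ b ∈ (s \ a).powerset, F a b ((s \ a) \ b) :=
      sum_powerset_powerset_sdiff s F
    _ = _ := by
      refine Finset.sum_congr rfl fun a _ => ?_
      rw [summand, place_shufS, Finset.mul_sum, Finset.sum_mul]
      refine Finset.sum_congr rfl fun b hb => ?_
      have hba := Finset.mem_powerset.1 hb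
      have hab : Disjoint a b := Finset.disjoint_sdiff.mono_right hba
      have hac : Disjoint a ((s \ a) \ b) := Finset.disjoint_sdiff.mono_right Finset.sdiff_subset
      refine (summand_assoc A B C hq hqb hz hab hac Finset.disjoint_sdiff).trans ?_
      rw [Finset.union_sdiff_of_subset hba]

lemma place_oneS_shufS (z : Fin N → K) (s : Finset (Fin N)) :
    place z s (shufS n q qbar (oneS n) B) = place z s B := by
  rw [place_shufS, Finset.sum_eq_single ∅ _ fun h => absurd (Finset.empty_mem_powerset s) h]
  · simp [summand, place_empty_oneS, ltProd, midProd, gtProd, crossProd, pairProd]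
  · exact fun t _ ht => summand_of_card_left_ne _ B z _
      (Finset.card_ne_zero.2 (Finset.nonempty_iff_ne_empty.2 ht))

lemma place_shufS_oneS (z : Fin N → K) (s : Finset (Fin N)) :
    place z s (shufS n q qbar A (oneS n)) = place z s A := by
  rw [place_shufS, Finset.sum_eq_single s _ fun h => absurd (Finset.mem_powerset_self s) h]
  · simp [summand, place_empty_oneS, ltProd, midProd, gtProd, crossProd, pairProd]
  · intro t ht hts
    refine summand_of_card_right_ne A _ z t ?_
    rw [Finset.card_ne_zero, Finset.sdiff_nonempty]
    exact fun h => hts ((Finset.mem_powerset.1 ht).antisymm h)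

end ShuffleProduct

theorem shuffle_spectral_associative (n : ℕ) (K : Type*) [Field K]
    (q qbar : K) (hq : q ≠ 0) (hqb : qbar ≠ 0) (k l m : ℕ)
    (A : (Fin k → K) → Matrix (Idx n k) (Idx n k) K)
    (B : (Fin l → K) → Matrix (Idx n l) (Idx n l) K)
    (C : (Fin m → K) → Matrix (Idx n m) (Idx n m) K) :
    (∀ z : Fin (k + l + m) → K, GoodZ qbar z →
      shufS n q qbar (shufS n q qbar A B) C z =
        recastM n (add_assoc k l m).symm
          (shufS n q qbar A (shufS n q qbar B C)
            (fun i => z (Fin.cast (add_assoc k l m).symm i)))) ∧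
    (∀ z : Fin (0 + l) → K, GoodZ qbar z →
      shufS n q qbar (oneS n) B z =
        recastM n (Nat.zero_add l).symm
          (B (fun i => z (Fin.cast (Nat.zero_add l).symm i)))) ∧
    (∀ z : Fin (k + 0) → K, GoodZ qbar z →
      shufS n q qbar A (oneS n) z = A z) := by
  refine ⟨fun z hz => ?_, fun z _ => ?_, fun z _ => ?_⟩
  · rw [← place_univ, ← place_shufS_assoc A B C hq hqb hz, place_univ_self]
  · rw [← place_univ, ← place_oneS_shufS (q := q) (qbar := qbar), place_univ_self]
  · rw [← place_univ_self (shufS n q qbar A (oneS n)), place_shufS_oneS]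
    exact place_univ_self A z
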